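/- Let Θ be a real symplectic 2n×2n matrix acting ℂ-linearly on ℂ^{2n}, ω a primitive k-th root of unity and 1 ≤ j ≤ k−1. Then the negative Maslov indices in (ℂ^{2n} × ℂ^{2n}, (−σ_ℂ) ⊕ σ_ℂ) satisfy i(Π², Γ(ωʲΘ), Δ) − i(Π², Γ(Θ), Δ) = −i(Γ(Θ), Δ, Γ(ωʲΘ)) + n + d_j, where d_j = −dim_ℂ(ker(Θ − 1) ∩ Π) + dim_ℂ(ker(Θ − ω^{−j}) ∩ Π) − dim_ℂ ker(Θ − ω^{−j}), all kernels being those of the ℂ-linear action of Θ on ℂ^{2n}. -/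

import Mathlib

open scoped ComplexOrder

noncomputable section

/-- `ℂ^{2n}`, written with coordinates indexed by `Fin n ⊕ Fin n`
(first block = `q`-coordinates, second block = `p`-coordinates). -/
abbrev CV (n : ℕ) := (Fin n ⊕ Fin n) → ℂ

/-- The sesquilinear extension `σ_ℂ(X,Y) = σ(X̄,Y)` of the standard symplectic form
`σ(x,y) = ⟨Jx,y⟩`, `J = [[0,−I],[I,0]]`, to `ℂ^{2n}` (conjugate-linear in the first
argument). -/
def sigmaC (n : ℕ) : CV n →ₛₗ[starRingEnd ℂ] CV n →ₗ[ℂ] ℂ :=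
  LinearMap.mk₂'ₛₗ (starRingEnd ℂ) (RingHom.id ℂ)
    (fun x y => (∑ i : Fin n, (starRingEnd ℂ) (x (Sum.inl i)) * y (Sum.inr i)) -
      ∑ i : Fin n, (starRingEnd ℂ) (x (Sum.inr i)) * y (Sum.inl i))
    (by intro x x' y; simp [add_mul, Finset.sum_add_distrib]; ring)
    (by
      intro c x y
      simp only [Pi.smul_apply, smul_eq_mul, map_mul]
      rw [mul_sub, Finset.mul_sum, Finset.mul_sum]
      congr 1 <;> exact Finset.sum_congr rfl (by intros; ring))
    (by intro x y y'; simp [mul_add, Finset.sum_add_distrib]; ring)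
    (by
      intro c x y
      simp only [Pi.smul_apply, smul_eq_mul, RingHom.id_apply]
      rw [mul_sub, Finset.mul_sum, Finset.mul_sum]
      congr 1 <;> exact Finset.sum_congr rfl (by intros; ring))

/-- The orthogonal of a subspace with respect to a sesquilinear form. -/
def sesqOrth {W : Type*} [AddCommGroup W] [Module ℂ W]
    (f : W →ₛₗ[starRingEnd ℂ] W →ₗ[ℂ] ℂ) (L : Submodule ℂ W) : Submodule ℂ W where
  carrier := {u | ∀ w ∈ L, f u w = 0}
  add_mem' := by
    intro a b ha hb w hw
    simp [map_add, ha w hw, hb w hw]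
  zero_mem' := by
    intro w hw
    simp
  smul_mem' := by
    intro c u hu w hw
    simp [LinearMap.map_smulₛₗ, hu w hw]

/-- A complex subspace is Lagrangian for a sesquilinear form when it coincides with its
orthogonal. -/
def IsLagrangianC {W : Type*} [AddCommGroup W] [Module ℂ W]
    (f : W →ₛₗ[starRingEnd ℂ] W →ₗ[ℂ] ℂ) (L : Submodule ℂ W) : Prop :=
  L = sesqOrth f L

/-- Negative inertia index of the (Hermitian) Maslov form of a triple of complex
Lagrangian subspaces: the supremum of complex dimensions of subspaces of
`L1 ∩ (L0 + L2)` on which `m(l1) = σ_ℂ(l0,l2)` is negative definite (negativity in the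
complex order: real and `< 0`). -/
def maslovIndexC {W : Type*} [AddCommGroup W] [Module ℂ W]
    (f : W →ₛₗ[starRingEnd ℂ] W →ₗ[ℂ] ℂ) (L0 L1 L2 : Submodule ℂ W) : ℕ :=
  sSup {d : ℕ | ∃ S : Submodule ℂ W, S ≤ L1 ⊓ (L0 ⊔ L2) ∧
    (∀ v ∈ S, v ≠ 0 → ∀ l0 ∈ L0, ∀ l2 ∈ L2, v = l0 + l2 → f l0 l2 < 0) ∧
    Module.finrank ℂ ↥S = d}

/-- The direct sum of two sesquilinear forms on a product space. -/
def sesqProd {W1 W2 : Type*} [AddCommGroup W1] [Module ℂ W1] [AddCommGroup W2] [Module ℂ W2]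
    (f : W1 →ₛₗ[starRingEnd ℂ] W1 →ₗ[ℂ] ℂ) (g : W2 →ₛₗ[starRingEnd ℂ] W2 →ₗ[ℂ] ℂ) :
    (W1 × W2) →ₛₗ[starRingEnd ℂ] (W1 × W2) →ₗ[ℂ] ℂ :=
  LinearMap.mk₂'ₛₗ (starRingEnd ℂ) (RingHom.id ℂ)
    (fun x y => f x.1 y.1 + g x.2 y.2)
    (by intro x x' y; simp [map_add]; ring)
    (by intro c x y; simp [LinearMap.map_smulₛₗ, smul_eq_mul, mul_add])
    (by intro x y y'; simp [map_add]; ring)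
    (by intro c x y; simp [smul_eq_mul, mul_add])

/-- The direct sum of `k` copies of a sesquilinear form. -/
def sesqPi {W : Type*} [AddCommGroup W] [Module ℂ W] (k : ℕ)
    (f : W →ₛₗ[starRingEnd ℂ] W →ₗ[ℂ] ℂ) :
    (Fin k → W) →ₛₗ[starRingEnd ℂ] (Fin k → W) →ₗ[ℂ] ℂ :=
  LinearMap.mk₂'ₛₗ (starRingEnd ℂ) (RingHom.id ℂ)
    (fun x y => ∑ i, f (x i) (y i))
    (by intro x x' y; simp [map_add, Finset.sum_add_distrib])
    (by intro c x y; simp [LinearMap.map_smulₛₗ, Finset.mul_sum])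
    (by intro x y y'; simp [map_add, Finset.sum_add_distrib])
    (by intro c x y; simp [Finset.mul_sum])

/-- The vertical Lagrangian subspace `Π = {(p,0)} ⊂ ℂ^{2n}`. -/
def PiV (n : ℕ) : Submodule ℂ (CV n) where
  carrier := {x | ∀ i, x (Sum.inr i) = 0}
  add_mem' := by intro a b ha hb i; simp [ha i, hb i]
  zero_mem' := by intro i; simp
  smul_mem' := by intro c x hx i; simp [hx i]

/-- The standard symplectic matrix `J = [[0,−I],[I,0]]`. -/
def symplJ (n : ℕ) : Matrix (Fin n ⊕ Fin n) (Fin n ⊕ Fin n) ℝ :=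
  Matrix.fromBlocks 0 (-1) 1 0

/-- The `ℂ`-linear action on `ℂ^{2n}` of a real `2n×2n` matrix. -/
def cAction {n : ℕ} (Θ : Matrix (Fin n ⊕ Fin n) (Fin n ⊕ Fin n) ℝ) : CV n →ₗ[ℂ] CV n :=
  (Θ.map (Complex.ofReal)).mulVecLin


/-- The form `(−σ_ℂ) ⊕ σ_ℂ` on `ℂ^{2n} × ℂ^{2n}`. -/
def sigma2C (n : ℕ) :
    (CV n × CV n) →ₛₗ[starRingEnd ℂ] (CV n × CV n) →ₗ[ℂ] ℂ :=
  sesqProd (-(sigmaC n)) (sigmaC n)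

/-- The form `(−σ_ℂ)^{⊕k} ⊕ σ_ℂ^{⊕k}` on `Σ^k × Σ^k`, `Σ = ℂ^{2n}`. -/
def bigSigmaC (n k : ℕ) :
    ((Fin k → CV n) × (Fin k → CV n)) →ₛₗ[starRingEnd ℂ]
      ((Fin k → CV n) × (Fin k → CV n)) →ₗ[ℂ] ℂ :=
  sesqProd (-(sesqPi k (sigmaC n))) (sesqPi k (sigmaC n))

/-- The Lagrangian subspace `Π² = Π × Π` of `ℂ^{2n} × ℂ^{2n}`. -/
def Pi2Sub (n : ℕ) : Submodule ℂ (CV n × CV n) := (PiV n).prod (PiV n)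

/-- The diagonal Lagrangian subspace `Δ = {(ξ,ξ)}` of `ℂ^{2n} × ℂ^{2n}`. -/
def DiaSub (n : ℕ) : Submodule ℂ (CV n × CV n) :=
  LinearMap.graph (LinearMap.id : CV n →ₗ[ℂ] CV n)

/-- The Lagrangian subspace `Π^{2k} = Π × ⋯ × Π` of `Σ^k × Σ^k`. -/
def Pi2kSub (n k : ℕ) : Submodule ℂ ((Fin k → CV n) × (Fin k → CV n)) :=
  (Submodule.pi Set.univ fun _ : Fin k => PiV n).prod
    (Submodule.pi Set.univ fun _ : Fin k => PiV n)

/-- The graph `Γ = {(ξ1,…,ξk,Θξ1,…,Θξk)}` of the diagonal action of `Θ` on `Σ^k`. -/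
def GamSub (n k : ℕ) (Θ : Matrix (Fin n ⊕ Fin n) (Fin n ⊕ Fin n) ℝ) :
    Submodule ℂ ((Fin k → CV n) × (Fin k → CV n)) :=
  LinearMap.graph (LinearMap.pi fun i : Fin k => (cAction Θ).comp (LinearMap.proj i))

/-- The graph `Δ^↺ = {(ξ1,…,ξk,ξ2,…,ξk,ξ1)}` of the cyclic shift on `Σ^k`. -/
def DcycSub (n k : ℕ) [NeZero k] : Submodule ℂ ((Fin k → CV n) × (Fin k → CV n)) :=
  LinearMap.graph (LinearMap.funLeft ℂ (CV n) (fun i : Fin k => i + 1))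


section aux
open Module

variable {X : Type*} [AddCommGroup X] [Module ℂ X] [FiniteDimensional ℂ X]

/-- injectivity-based dimension bound -/
theorem aux_key (K : X →ₛₗ[starRingEnd ℂ] X →ₗ[ℂ] ℂ) (V : Submodule ℂ X)
    {E1 E2 E4 : Type*} [AddCommGroup E1] [Module ℂ E1] [FiniteDimensional ℂ E1]
    [AddCommGroup E2] [Module ℂ E2] [FiniteDimensional ℂ E2]
    [AddCommGroup E4] [Module ℂ E4] [FiniteDimensional ℂ E4]
    (T : Submodule ℂ X) (hTV : T ≤ V)
    (f1 : E1 →ₗ[ℂ] X) (f2 : E2 →ₗ[ℂ] X) (f4 : E4 →ₗ[ℂ] X)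
    (h1 : ∀ x, f1 x ∈ V) (h2 : ∀ x, f2 x ∈ V) (h4 : ∀ x, f4 x ∈ V)
    (n1 : ∀ x, x ≠ 0 → (K (f1 x) (f1 x)).re < 0)
    (n2 : ∀ x, x ≠ 0 → (K (f2 x) (f2 x)).re < 0)
    (p4 : ∀ x, x ≠ 0 → 0 < (K (f4 x) (f4 x)).re)
    (hT : ∀ x ∈ T, ∀ y ∈ T, K x y = 0)
    (hH : ∀ x ∈ V, ∀ y ∈ V, (starRingEnd ℂ) (K x y) = K y x)
    (o12 : ∀ x y, K (f1 x) (f2 y) = 0)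
    (o1 : ∀ x ∈ T, ∀ y, K x (f1 y) = 0)
    (o2 : ∀ x ∈ T, ∀ y, K x (f2 y) = 0) :
    finrank ℂ E1 + finrank ℂ E2 + finrank ℂ T + finrank ℂ E4 ≤ finrank ℂ V := by
  let F : ((E1 × E2) × T) × E4 →ₗ[ℂ] X := ((f1.coprod f2).coprod T.subtype).coprod f4
  have hF : ∀ x, F x ∈ V := by
    rintro ⟨⟨⟨a, b⟩, c⟩, d⟩
    simp only [F, LinearMap.coprod_apply]
    exact V.add_mem (V.add_mem (V.add_mem (h1 a) (h2 b)) (hTV c.2)) (h4 d)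
  have hinj : Function.Injective (F.codRestrict V hF) := by
    rw [← LinearMap.ker_eq_bot, LinearMap.ker_codRestrict, LinearMap.ker_eq_bot']
    rintro ⟨⟨⟨a, b⟩, c⟩, d⟩ h
    simp only [F, LinearMap.coprod_apply, Submodule.subtype_apply] at h
    have hd : f4 d = -(f1 a + f2 b + c) := by
      rw [eq_neg_iff_add_eq_zero, add_comm]; exact h
    have o21 : K (f2 b) (f1 a) = 0 := by rw [← hH _ (h1 a) _ (h2 b), o12]; simp
    have o1' : K (f1 a) c = 0 := by rw [← hH _ (hTV c.2) _ (h1 a), o1 _ c.2]; simp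
    have o2' : K (f2 b) c = 0 := by rw [← hH _ (hTV c.2) _ (h2 b), o2 _ c.2]; simp
    have e : K (f4 d) (f4 d) = K (f1 a) (f1 a) + K (f2 b) (f2 b) := by
      rw [hd]
      simp [map_add, o12, o21, o1', o2', o1 _ c.2, o2 _ c.2, hT _ c.2 _ c.2]
      ring
    have q1 : (K (f1 a) (f1 a)).re ≤ 0 := by
      by_cases ha : a = 0
      · simp [ha]
      · exact (n1 a ha).le
    have q2 : (K (f2 b) (f2 b)).re ≤ 0 := by
      by_cases ha : b = 0
      · simp [ha]
      · exact (n2 b ha).le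
    have e' := congrArg Complex.re e
    rw [Complex.add_re] at e'
    have hd0 : d = 0 := by
      by_contra hd0
      have := p4 d hd0
      linarith
    have ha0 : a = 0 := by
      by_contra h0
      have := n1 a h0
      rw [hd0] at e'
      simp at e'
      linarith
    have hb0 : b = 0 := by
      by_contra h0
      have := n2 b h0
      rw [hd0] at e'
      simp at e'
      linarith
    subst hd0 ha0 hb0
    simp at h
    simp [h]
  have := LinearMap.finrank_le_finrank_of_injective hinj
  simpa using this

theorem aux_decomp (H : X →ₛₗ[starRingEnd ℂ] X →ₗ[ℂ] ℂ) :
    ∀ (d : ℕ) (M : Submodule ℂ X), finrank ℂ M = d →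
    (∀ x ∈ M, ∀ y ∈ M, (starRingEnd ℂ) (H x y) = H y x) →
    ∃ P N : Submodule ℂ X, P ≤ M ∧ N ≤ M ∧ (∀ x ∈ P, x ≠ 0 → 0 < (H x x).re) ∧
      (∀ x ∈ N, x ≠ 0 → (H x x).re < 0) ∧
      finrank ℂ P + finrank ℂ N + finrank ℂ ↥(M ⊓ sesqOrth H M) = finrank ℂ M := by
  intro d
  induction d with
  | zero =>
    intro M hM hH
    have : M = ⊥ := Submodule.finrank_eq_zero.mp hM
    subst this
    exact ⟨⊥, ⊥, le_rfl, le_rfl, by simp, by simp, by simp⟩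
  | succ d ih =>
    intro M hM hH
    by_cases hz : ∀ x ∈ M, (H x x).re = 0
    · refine ⟨⊥, ⊥, bot_le, bot_le, by simp, by simp, ?_⟩
      have : M ≤ sesqOrth H M := by
        intro x hx y hy
        have re0 : ∀ x ∈ M, ∀ y ∈ M, (H x y).re = 0 := by
          intro x hx y hy
          have h1 := hz _ (M.add_mem hx hy)
          have h2 := congrArg Complex.re (hH x hx y hy)
          have h3 := hz x hx
          have h4 := hz y hy
          simp at h1 h2
          linarith
        apply Complex.ext
        · exact re0 x hx y hy
        · have := re0 x hx _ (M.smul_mem Complex.I hy)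
          simpa using this
      rw [inf_eq_left.mpr this]; simp
    · push Not at hz
      obtain ⟨v, hv, hvv⟩ := hz
      have hvv' : H v v ≠ 0 := fun h => hvv (by simp [h])
      have hv0 : v ≠ 0 := by rintro rfl; simp at hvv
      set M' := M ⊓ LinearMap.ker (H v) with hM'
      have hsup : M' ⊔ (ℂ ∙ v) = M := by
        apply le_antisymm
        · exact sup_le inf_le_left (by simpa using hv)
        · intro x hx
          rw [Submodule.mem_sup]
          refine ⟨x - (H v x / H v v) • v, ⟨M.sub_mem hx (M.smul_mem _ hv), ?_⟩,
            (H v x / H v v) • v, Submodule.smul_mem _ _ (Submodule.mem_span_singleton_self v), by simp⟩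
          simp [hvv']
      have disj : ∀ Q : Submodule ℂ X, Q ≤ M' → finrank ℂ ↥(Q ⊔ (ℂ ∙ v)) = finrank ℂ Q + 1 := by
        intro Q hQ
        have h := Submodule.finrank_sup_add_finrank_inf_eq Q (ℂ ∙ v)
        have h0 : Q ⊓ (ℂ ∙ v) = ⊥ := by
          rw [eq_bot_iff]
          rintro x ⟨hx, hx'⟩
          obtain ⟨c, rfl⟩ := Submodule.mem_span_singleton.mp hx'
          have := (hQ hx).2
          simp [hvv'] at this
          simp [this]
        rw [h0, finrank_span_singleton hv0] at h
        simpa using h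
      have hfr := disj M' le_rfl
      rw [hsup] at hfr
      have hrv : ∀ x ∈ M', H x v = 0 := by
        intro x hx
        rw [← hH v hv x hx.1, LinearMap.mem_ker.mp hx.2]; simp
      obtain ⟨P, N, hP, hN, hPp, hNn, hdim⟩ := ih M' (by omega)
        (fun x hx y hy => hH x hx.1 y hy.1)
      have hrad : M ⊓ sesqOrth H M = M' ⊓ sesqOrth H M' := by
        ext x
        constructor
        · rintro ⟨hx, ho⟩
          refine ⟨⟨hx, ?_⟩, fun y hy => ho y hy.1⟩
          rw [SetLike.mem_coe, LinearMap.mem_ker, ← hH x hx v hv, ho v hv]; simp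
        · rintro ⟨hx, ho⟩
          refine ⟨hx.1, fun y hy => ?_⟩
          rw [← hsup, Submodule.mem_sup] at hy
          obtain ⟨y', hy', z, hz, rfl⟩ := hy
          obtain ⟨c, rfl⟩ := Submodule.mem_span_singleton.mp hz
          rw [map_add, ho y' hy', map_smul, hrv x hx]; simp
      have comp : ∀ q ∈ M', ∀ c : ℂ, (H (q + c • v) (q + c • v)).re =
          (H q q).re + Complex.normSq c * (H v v).re := by
        intro q hq c
        have him : (H v v).im = 0 := by
          have := congrArg Complex.im (hH v hv v hv)
          simp at this
          linarith
        have h2 : H v q = 0 := hq.2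
        simp [hrv q hq, h2, Complex.normSq_apply, him]
        ring
      rw [hrad]
      rcases lt_or_gt_of_ne hvv with hneg | hpos
      · refine ⟨P, N ⊔ (ℂ ∙ v), hP.trans inf_le_left,
          sup_le (hN.trans inf_le_left) (by simpa using hv), hPp, ?_, ?_⟩
        · intro x hx hx0
          rw [Submodule.mem_sup] at hx
          obtain ⟨y', hy', z, hz, rfl⟩ := hx
          obtain ⟨c, rfl⟩ := Submodule.mem_span_singleton.mp hz
          rw [comp _ (hN hy')]
          by_cases hc : c = 0
          · subst hc
            simp at hx0
            simpa using hNn y' hy' hx0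
          · have := Complex.normSq_pos.mpr hc
            have h3 : (H y' y').re ≤ 0 := by
              by_cases h0 : y' = 0
              · simp [h0]
              · exact (hNn y' hy' h0).le
            nlinarith
        · have := disj N hN
          omega
      · refine ⟨P ⊔ (ℂ ∙ v), N,
          sup_le (hP.trans inf_le_left) (by simpa using hv), hN.trans inf_le_left, ?_, hNn, ?_⟩
        · intro x hx hx0
          rw [Submodule.mem_sup] at hx
          obtain ⟨y', hy', z, hz, rfl⟩ := hx
          obtain ⟨c, rfl⟩ := Submodule.mem_span_singleton.mp hz
          rw [comp _ (hP hy')]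
          by_cases hc : c = 0
          · subst hc
            simp at hx0
            simpa using hPp y' hy' hx0
          · have := Complex.normSq_pos.mpr hc
            have h3 : 0 ≤ (H y' y').re := by
              by_cases h0 : y' = 0
              · simp [h0]
              · exact (hPp y' hy' h0).le
            nlinarith
        · have := disj P hP
          omega

/-- any negative definite subspace is bounded by the negative part of a decomposition -/
theorem aux_neg_le (H : X →ₛₗ[starRingEnd ℂ] X →ₗ[ℂ] ℂ) (M P N S : Submodule ℂ X)
    (hH : ∀ x ∈ M, ∀ y ∈ M, (starRingEnd ℂ) (H x y) = H y x)
    (hP : P ≤ M) (hS : S ≤ M) (hPp : ∀ x ∈ P, x ≠ 0 → 0 < (H x x).re)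
    (hSn : ∀ x ∈ S, x ≠ 0 → (H x x).re < 0)
    (hdim : finrank ℂ P + finrank ℂ N + finrank ℂ ↥(M ⊓ sesqOrth H M) = finrank ℂ M) :
    finrank ℂ S ≤ finrank ℂ N := by
  have := aux_key H M (M ⊓ sesqOrth H M) inf_le_left S.subtype
    (0 : PUnit →ₗ[ℂ] X) P.subtype (fun x => hS x.2) (fun x => by simp)
    (fun x => hP x.2) (fun x hx => hSn x x.2 (by simpa using hx))
    (fun x hx => (hx (Subsingleton.elim _ _)).elim)
    (fun x hx => hPp x x.2 (by simpa using hx))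
    (fun x hx y hy => hx.2 y hy.1) hH (by simp)
    (fun x hx y => hx.2 _ (hS y.2)) (by simp)
  omega

/-- dimension of the orthogonal -/
theorem aux_finrank_orth (f : X →ₛₗ[starRingEnd ℂ] X →ₗ[ℂ] ℂ)
    (hs : ∀ x y, (starRingEnd ℂ) (f x y) = - f y x)
    (hn : ∀ x, (∀ y, f x y = 0) → x = 0) (L : Submodule ℂ X) :
    finrank ℂ (sesqOrth f L) + finrank ℂ L = finrank ℂ X := by
  let b := Module.finBasis ℂ L
  let F : X →ₗ[ℂ] (Fin (finrank ℂ L) → ℂ) := LinearMap.pi fun i => f (b i)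
  have hsymm : ∀ x y, f x y = 0 → f y x = 0 := by
    intro x y h
    have := hs x y
    rw [h] at this
    simpa using this.symm
  have hker : LinearMap.ker F = sesqOrth f L := by
    ext x
    simp only [F, LinearMap.mem_ker]
    constructor
    · intro h w hw
      apply hsymm
      have h1 : ∀ i, f (b i) x = 0 := fun i => congrFun h i
      have h2 := b.sum_repr ⟨w, hw⟩
      have h3 : w = ∑ i, (b.repr ⟨w, hw⟩ i) • (b i : X) := by
        have := congrArg (Submodule.subtype L) h2
        rw [map_sum] at this
        exact this.symm
      rw [h3]
      simp [h1]
    · intro h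
      funext i
      exact hsymm _ _ (h _ (b i).2)
  have hrange : LinearMap.range F = ⊤ := by
    by_contra hne
    obtain ⟨g, hg0, hg⟩ := Submodule.exists_le_ker_of_lt_top _ (lt_top_iff_ne_top.mpr hne)
    apply hg0
    have h1 : ∀ x, ∑ i, f (b i) x * g (Pi.single i 1) = 0 := by
      intro x
      have h2 : g (F x) = 0 := hg ⟨x, rfl⟩
      rw [LinearMap.pi_apply_eq_sum_univ] at h2
      rw [← h2]
      refine Finset.sum_congr rfl fun i _ => ?_
      have e : (Pi.single i 1 : Fin (finrank ℂ L) → ℂ) = fun j => if i = j then 1 else 0 := by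
        funext j
        simp [Pi.single_apply, eq_comm]
      rw [e]; rfl
    have h2 : ∑ i, (starRingEnd ℂ) (g (Pi.single i 1)) • (b i : X) = 0 := by
      apply hn
      intro y
      rw [← h1 y]
      simp [mul_comm]
    have h3 : ∑ i, (starRingEnd ℂ) (g (Pi.single i 1)) • b i = 0 := by
      apply Subtype.ext
      simpa using h2
    have h4 := Fintype.linearIndependent_iff.mp b.linearIndependent _ h3
    apply LinearMap.pi_ext'
    intro i
    ext
    simpa using h4 i
  have := LinearMap.finrank_range_add_finrank_ker F
  rw [hker, hrange] at this
  simp at this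
  omega

theorem aux_orth_orth (f : X →ₛₗ[starRingEnd ℂ] X →ₗ[ℂ] ℂ)
    (hs : ∀ x y, (starRingEnd ℂ) (f x y) = - f y x)
    (hn : ∀ x, (∀ y, f x y = 0) → x = 0) (L : Submodule ℂ X) :
    sesqOrth f (sesqOrth f L) = L := by
  symm
  apply Submodule.eq_of_le_of_finrank_eq
  · intro x hx y hy
    have := hs y x
    rw [hy x hx] at this
    simpa using this.symm
  · have h1 := aux_finrank_orth f hs hn L
    have h2 := aux_finrank_orth f hs hn (sesqOrth f L)
    omega

theorem aux_orth_sup (f : X →ₛₗ[starRingEnd ℂ] X →ₗ[ℂ] ℂ) (L M : Submodule ℂ X) :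
    sesqOrth f (L ⊔ M) = sesqOrth f L ⊓ sesqOrth f M := by
  ext x
  constructor
  · intro h
    exact ⟨fun w hw => h w (Submodule.mem_sup_left hw), fun w hw => h w (Submodule.mem_sup_right hw)⟩
  · rintro ⟨h1, h2⟩ w hw
    obtain ⟨a, ha, b, hb, rfl⟩ := Submodule.mem_sup.mp hw
    rw [map_add, h1 a ha, h2 b hb, add_zero]

theorem aux_split (L0 L2 : Submodule ℂ X) :
    ∃ ρ : X →ₗ[ℂ] X, ∀ w ∈ L0 ⊔ L2, ρ w ∈ L0 ∧ w - ρ w ∈ L2 := by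
  let F : L0 × L2 →ₗ[ℂ] X := L0.subtype.coprod L2.subtype
  have hr : LinearMap.range F = L0 ⊔ L2 := by
    simp [F, LinearMap.range_coprod]
  obtain ⟨g, hg⟩ := F.rangeRestrict.exists_rightInverse_of_surjective F.range_rangeRestrict
  obtain ⟨g', hg'⟩ := LinearMap.exists_extend g
  refine ⟨L0.subtype ∘ₗ LinearMap.fst ℂ L0 L2 ∘ₗ g', fun w hw => ?_⟩
  rw [← hr] at hw
  have h1 : g' w = g ⟨w, hw⟩ := LinearMap.congr_fun hg' ⟨w, hw⟩
  have h2 : F (g ⟨w, hw⟩) = w := congrArg Subtype.val (LinearMap.congr_fun hg ⟨w, hw⟩)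
  refine ⟨Subtype.coe_prop _, ?_⟩
  simp only [LinearMap.comp_apply, h1]
  have h3 : w - ((g ⟨w, hw⟩).1 : X) = (g ⟨w, hw⟩).2 := by
    nth_rewrite 1 [← h2]
    simp [F]
  simp only [LinearMap.fst_apply, Submodule.subtype_apply, h3]
  exact Subtype.coe_prop _

theorem aux_lag (f : X →ₛₗ[starRingEnd ℂ] X →ₗ[ℂ] ℂ) {L : Submodule ℂ X}
    (h : IsLagrangianC f L) {x y : X} (hx : x ∈ L) (hy : y ∈ L) : f x y = 0 := by
  rw [h] at hx
  exact hx y hy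

theorem aux_maslov (f : X →ₛₗ[starRingEnd ℂ] X →ₗ[ℂ] ℂ)
    (hs : ∀ x y, (starRingEnd ℂ) (f x y) = - f y x)
    (hn : ∀ x, (∀ y, f x y = 0) → x = 0) (L0 L1 L2 : Submodule ℂ X)
    (h0 : IsLagrangianC f L0) (h1 : IsLagrangianC f L1) (h2 : IsLagrangianC f L2)
    (ρ : X →ₗ[ℂ] X) (hρ : ∀ w ∈ L0 ⊔ L2, ρ w ∈ L0 ∧ w - ρ w ∈ L2) :
    (∀ x ∈ L1 ⊓ (L0 ⊔ L2), ∀ y ∈ L1 ⊓ (L0 ⊔ L2), (starRingEnd ℂ) (f (ρ x) y) = f (ρ y) x) ∧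
    ∃ P N : Submodule ℂ X, P ≤ L1 ⊓ (L0 ⊔ L2) ∧ N ≤ L1 ⊓ (L0 ⊔ L2) ∧
      (∀ x ∈ P, x ≠ 0 → 0 < (f (ρ x) x).re) ∧
      (∀ x ∈ N, x ≠ 0 → (f (ρ x) x).re < 0) ∧
      finrank ℂ N = maslovIndexC f L0 L1 L2 ∧
      finrank ℂ P + finrank ℂ N + finrank ℂ ↥(L0 ⊓ L1) + finrank ℂ ↥(L1 ⊓ L2)
        + finrank ℂ ↥(L0 ⊓ L2) + finrank ℂ L1
        = finrank ℂ X + 2 * finrank ℂ ↥(L0 ⊓ L1 ⊓ L2) ∧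
      (∀ S : Submodule ℂ X, S ≤ L1 ⊓ (L0 ⊔ L2) → (∀ x ∈ S, x ≠ 0 → (f (ρ x) x).re < 0) →
        finrank ℂ S ≤ finrank ℂ N) ∧
      (∀ S : Submodule ℂ X, S ≤ L1 ⊓ (L0 ⊔ L2) → (∀ x ∈ S, x ≠ 0 → 0 < (f (ρ x) x).re) →
        finrank ℂ S ≤ finrank ℂ P) := by
  set M := L1 ⊓ (L0 ⊔ L2) with hM
  have hsymm : ∀ x y, f x y = 0 → f y x = 0 := by
    intro x y h
    have := hs x y
    rw [h] at this
    simpa using this.symm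
  let H : X →ₛₗ[starRingEnd ℂ] X →ₗ[ℂ] ℂ := f.comp ρ
  have hHdef : ∀ x y, H x y = f (ρ x) y := fun x y => rfl
  have hH : ∀ x ∈ M, ∀ y ∈ M, (starRingEnd ℂ) (H x y) = H y x := by
    intro x hx y hy
    rw [hHdef, hHdef, hs]
    have e1 : f y x = 0 := aux_lag f h1 hy.1 hx.1
    have e2 : f (ρ y) (ρ x) = 0 := aux_lag f h0 (hρ y hy.2).1 (hρ x hx.2).1
    have e3 : f (y - ρ y) (x - ρ x) = 0 := aux_lag f h2 (hρ y hy.2).2 (hρ x hx.2).2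
    simp only [map_sub, LinearMap.sub_apply, e1, e2] at e3
    linear_combination e3
  refine ⟨hH, ?_⟩
  obtain ⟨P, N, hP, hN, hPp, hNn, hdim⟩ := aux_decomp H _ M rfl hH
  have hbN : ∀ S : Submodule ℂ X, S ≤ M → (∀ x ∈ S, x ≠ 0 → (f (ρ x) x).re < 0) →
      finrank ℂ S ≤ finrank ℂ N := fun S hS hS' =>
    aux_neg_le H M P N S hH hP hS hPp hS' hdim
  have hbP : ∀ S : Submodule ℂ X, S ≤ M → (∀ x ∈ S, x ≠ 0 → 0 < (f (ρ x) x).re) →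
      finrank ℂ S ≤ finrank ℂ P := by
    intro S hS hS'
    have hor : sesqOrth (-H) M = sesqOrth H M := by
      ext x
      constructor <;> intro h w hw <;> simpa using h w hw
    apply aux_neg_le (-H) M N P S _ hN hS
    · intro x hx hx0
      simpa using hNn x hx hx0
    · intro x hx hx0
      simpa [hHdef] using hS' x hx hx0
    · rw [hor]; omega
    · intro x hx y hy
      simp [hH x hx y hy]
  -- independence of decomposition
  have hform : ∀ v ∈ M, ∀ l0 ∈ L0, ∀ l2 ∈ L2, v = l0 + l2 → f l0 l2 = f (ρ v) v := by
    intro v hv l0 hl0 l2 hl2 e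
    have hv' := hρ v hv.2
    have a1 : f l0 l2 = f l0 v := by rw [e, map_add, aux_lag f h0 hl0 hl0, zero_add]
    have x0 : l0 - ρ v ∈ L0 := L0.sub_mem hl0 hv'.1
    have x2 : l0 - ρ v ∈ L2 := by
      have : l0 - ρ v = (v - ρ v) - l2 := by rw [e]; abel
      rw [this]; exact L2.sub_mem hv'.2 hl2
    have a2 : f (l0 - ρ v) v = 0 := by
      nth_rewrite 2 [e]
      rw [map_add, aux_lag f h0 x0 hl0, aux_lag f h2 x2 hl2, add_zero]
    rw [a1]
    rw [map_sub, LinearMap.sub_apply] at a2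
    linear_combination a2
  have hmas : finrank ℂ N = maslovIndexC f L0 L1 L2 := by
    symm
    unfold maslovIndexC
    apply IsGreatest.csSup_eq
    constructor
    · refine ⟨N, hN, ?_, rfl⟩
      intro v hv hv0 l0 hl0 l2 hl2 e
      rw [hform v (hN hv) l0 hl0 l2 hl2 e, Complex.lt_def]
      refine ⟨by simpa [hHdef] using hNn v hv hv0, ?_⟩
      have := congrArg Complex.im (hH v (hN hv) v (hN hv))
      rw [hHdef] at this
      simp at this
      simp
      linarith
    · rintro d ⟨S, hS, hS', rfl⟩
      apply hbN S hS
      intro x hx hx0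
      have hx2 := hρ x (hS hx).2
      have := hS' x hx hx0 _ hx2.1 _ hx2.2 (by abel)
      rw [hform x (hS hx) _ hx2.1 _ hx2.2 (by abel), Complex.lt_def] at this
      simpa using this.1
  refine ⟨P, N, hP, hN, hPp, hNn, hmas, ?_, hbN, hbP⟩
  -- dimensions
  have o02 : sesqOrth f (L0 ⊓ L2) = L0 ⊔ L2 := by
    rw [← aux_orth_orth f hs hn (L0 ⊔ L2), aux_orth_sup, ← h0, ← h2]
  have hMo : M = sesqOrth f (L1 ⊔ (L0 ⊓ L2)) := by
    rw [aux_orth_sup, ← h1, o02]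
  have hMoo : sesqOrth f M = L1 ⊔ (L0 ⊓ L2) := by
    rw [hMo, aux_orth_orth f hs hn]
  have d1 := aux_finrank_orth f hs hn (L1 ⊔ (L0 ⊓ L2))
  rw [← hMo] at d1
  have d2 := Submodule.finrank_sup_add_finrank_inf_eq L1 (L0 ⊓ L2)
  have d3 := Submodule.finrank_sup_add_finrank_inf_eq (L0 ⊓ L1) (L1 ⊓ L2)
  have hrad : M ⊓ sesqOrth H M = (L0 ⊓ L1) ⊔ (L1 ⊓ L2) := by
    apply le_antisymm
    · rintro x ⟨hx, ho⟩
      have hx' := hρ x hx.2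
      have : ρ x ∈ sesqOrth f M := ho
      rw [hMoo, Submodule.mem_sup] at this
      obtain ⟨l, hl, z, hz, e⟩ := this
      rw [Submodule.mem_sup]
      refine ⟨l, ⟨?_, hl⟩, x - l, ⟨L1.sub_mem hx.1 hl, ?_⟩, by abel⟩
      · have : l = ρ x - z := by rw [← e]; abel
        rw [this]; exact L0.sub_mem hx'.1 hz.1
      · have : x - l = (x - ρ x) + z := by rw [← e]; abel
        rw [this]; exact L2.add_mem hx'.2 hz.2
    · apply sup_le
      · rintro x ⟨hx0, hx1⟩
        have hxM : x ∈ M := ⟨hx1, Submodule.mem_sup_left hx0⟩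
        refine ⟨hxM, fun y hy => ?_⟩
        have e : f (ρ x) y = f x y := by
          have x2 : x - ρ x ∈ L2 := (hρ x hxM.2).2
          have x0 : x - ρ x ∈ L0 := L0.sub_mem hx0 (hρ x hxM.2).1
          have : f (x - ρ x) y = 0 := by
            have hy' := hρ y hy.2
            have : y = ρ y + (y - ρ y) := by abel
            rw [this, map_add, aux_lag f h0 x0 hy'.1, aux_lag f h2 x2 hy'.2, add_zero]
          rw [map_sub, LinearMap.sub_apply] at this
          linear_combination -this
        rw [hHdef, e]
        exact aux_lag f h1 hx1 hy.1
      · rintro x ⟨hx1, hx2⟩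
        have hxM : x ∈ M := ⟨hx1, Submodule.mem_sup_right hx2⟩
        refine ⟨hxM, fun y hy => ?_⟩
        have x0 : ρ x ∈ L0 := (hρ x hxM.2).1
        have x2 : ρ x ∈ L2 := by
          have := L2.sub_mem hx2 (hρ x hxM.2).2
          simpa using this
        have hy' := hρ y hy.2
        have : y = ρ y + (y - ρ y) := by abel
        rw [hHdef, this, map_add, aux_lag f h0 x0 hy'.1, aux_lag f h2 x2 hy'.2, add_zero]
  rw [hrad] at hdim
  have i1 : L1 ⊓ (L0 ⊓ L2) = L0 ⊓ L1 ⊓ L2 := by rw [← inf_assoc, inf_comm L1 L0]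
  have i2 : L0 ⊓ L1 ⊓ (L1 ⊓ L2) = L0 ⊓ L1 ⊓ L2 := by
    rw [inf_assoc, ← inf_assoc L1 L1, inf_idem, ← inf_assoc]
  rw [i1] at d2
  rw [i2] at d3
  omega

theorem aux_fmap {Y : Type*} [AddCommGroup Y] [Module ℂ Y] (g : X →ₗ[ℂ] Y) (L : Submodule ℂ X)
    (hg : Function.Injective g) : finrank ℂ (L.map g) = finrank ℂ L :=
  (Submodule.equivMapOfInjective g hg L).finrank_eq.symm

theorem aux_finrank_prod (A D : Submodule ℂ X) :
    finrank ℂ ↥(A.prod D) = finrank ℂ A + finrank ℂ D := by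
  have h : LinearMap.range (A.subtype.prodMap D.subtype) = A.prod D := by
    rw [LinearMap.range_prodMap]; simp
  rw [← h, LinearMap.finrank_range_of_inj, Module.finrank_prod]
  rintro ⟨a, b⟩ ⟨c, d⟩ h
  simpa using h

set_option maxHeartbeats 1000000 in
theorem aux_main (f : X →ₛₗ[starRingEnd ℂ] X →ₗ[ℂ] ℂ)
    (hs : ∀ x y, (starRingEnd ℂ) (f x y) = - f y x)
    (hn : ∀ x, (∀ y, f x y = 0) → x = 0) (A B C D : Submodule ℂ X)
    (hA : IsLagrangianC f A) (hB : IsLagrangianC f B) (hC : IsLagrangianC f C)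
    (hD : IsLagrangianC f D) (hBC : B ⊓ C = ⊥)
    (ρ : X →ₗ[ℂ] X) (hρ : ∀ w, ρ w ∈ C ∧ w - ρ w ∈ B)
    (R : X →ₗ[ℂ] X) (hRi : Function.Injective R) (hRA : ∀ a ∈ A, R a ∈ A)
    (hR : ∀ a ∈ A, f (ρ (R a)) (R a) = - f (ρ a) a)
    (m : ℕ) (hm : finrank ℂ X = 2 * m) :
    2 * ((maslovIndexC f A B D : ℤ) - maslovIndexC f A C D + maslovIndexC f C D B)
      = m - 2 * finrank ℂ ↥(A ⊓ C ⊓ D) + finrank ℂ ↥(A ⊓ C) - finrank ℂ ↥(A ⊓ B)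
        - 2 * finrank ℂ ↥(B ⊓ D) + 2 * finrank ℂ ↥(A ⊓ B ⊓ D) := by
  have hlag : ∀ L : Submodule ℂ X, IsLagrangianC f L → finrank ℂ L = m := by
    intro L hL
    have := aux_finrank_orth f hs hn L
    rw [← hL] at this
    omega
  have dA := hlag A hA
  have dB := hlag B hB
  have dC := hlag C hC
  have dD := hlag D hD
  have htop : C ⊔ B = ⊤ := by
    rw [eq_top_iff]
    intro w _
    rw [Submodule.mem_sup]
    exact ⟨_, (hρ w).1, _, (hρ w).2, by abel⟩
  have hCB : C ⊓ B = ⊥ := by rw [inf_comm]; exact hBC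
  have ρB : ∀ w ∈ B, ρ w = 0 := by
    intro w hw
    have : ρ w ∈ C ⊓ B := ⟨(hρ w).1, by simpa using B.sub_mem hw (hρ w).2⟩
    rw [hCB] at this
    simpa using this
  have ρC : ∀ w ∈ C, ρ w = w := by
    intro w hw
    have : w - ρ w ∈ C ⊓ B := ⟨C.sub_mem hw (hρ w).1, (hρ w).2⟩
    rw [hCB, Submodule.mem_bot, sub_eq_zero] at this
    exact this.symm
  obtain ⟨r, hr⟩ := aux_split A D
  obtain ⟨-, PB, NB, hPB, hNB, hPBp, hNBn, mB, eB, -, -⟩ :=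
    aux_maslov f hs hn A B D hA hB hD r hr
  obtain ⟨-, PC, NC, hPC, hNC, hPCp, hNCn, mC, eC, -, -⟩ :=
    aux_maslov f hs hn A C D hA hC hD r hr
  obtain ⟨hHD, PD, ND, hPD, hND, hPDp, hNDn, mD, eD, -, -⟩ :=
    aux_maslov f hs hn C D B hC hD hB ρ (fun w _ => hρ w)
  obtain ⟨hHA, PA, NA, hPA, hNA, hPAp, hNAn, mA, eA, bA, bA'⟩ :=
    aux_maslov f hs hn C A B hC hA hB ρ (fun w _ => hρ w)
  rw [htop, inf_top_eq] at hHD hPD hND hHA hPA hNA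
  have hPN : finrank ℂ PA = finrank ℂ NA := by
    apply le_antisymm
    · have h1 : finrank ℂ (PA.map R) = finrank ℂ PA :=
        aux_fmap R PA hRi
      rw [← h1]
      apply bA
      · rw [htop, inf_top_eq]
        rintro _ ⟨x, hx, rfl⟩
        exact hRA x (hPA hx)
      · rintro _ ⟨x, hx, rfl⟩ h0
        rw [hR x (hPA hx)]
        have := hPAp x hx (by rintro rfl; simp at h0)
        simpa using this
    · have h1 : finrank ℂ (NA.map R) = finrank ℂ NA :=
        aux_fmap R NA hRi
      rw [← h1]
      apply bA'
      · rw [htop, inf_top_eq]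
        rintro _ ⟨x, hx, rfl⟩
        exact hRA x (hNA hx)
      · rintro _ ⟨x, hx, rfl⟩ h0
        rw [hR x (hNA hx)]
        have := hNAn x hx (by rintro rfl; simp at h0)
        simpa using this
  have qC : ∀ w, ∀ c ∈ C, f (ρ w) c = 0 := fun w c hc => aux_lag f hC (hρ w).1 hc
  have qB : ∀ w, ∀ b ∈ B, f (ρ w) b = f w b := by
    intro w b hb
    have := aux_lag f hB (hρ w).2 hb
    rw [map_sub, LinearMap.sub_apply] at this
    linear_combination -this
  let K : X × X →ₛₗ[starRingEnd ℂ] X × X →ₗ[ℂ] ℂ := sesqProd (-(f.comp ρ)) (f.comp ρ)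
  have hK : ∀ x y, K x y = - f (ρ x.1) y.1 + f (ρ x.2) y.2 := fun x y => rfl
  let s : X →ₗ[ℂ] X × X := LinearMap.prod r (r - LinearMap.id)
  have hs' : ∀ x, s x = (r x, r x - x) := fun x => rfl
  let V := A.prod D
  have hV : finrank ℂ V = 2 * m := by
    rw [aux_finrank_prod, dA, dD]; ring
  have hsV : ∀ x ∈ A ⊔ D, s x ∈ V := by
    intro x hx
    refine ⟨(hr x hx).1, ?_⟩
    rw [hs']
    have := D.neg_mem (hr x hx).2
    simpa using this
  have hherm : ∀ x ∈ V, ∀ y ∈ V, (starRingEnd ℂ) (K x y) = K y x := by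
    rintro x ⟨hx1, hx2⟩ y ⟨hy1, hy2⟩
    rw [hK, hK, map_add, map_neg, hHA _ hx1 _ hy1, hHD _ hx2 _ hy2]
  have KB : ∀ b ∈ B, K (s b) (s b) = - f (r b) b := by
    intro b hb
    rw [hK, hs']
    simp only [map_sub, ρB b hb, sub_zero, qB _ b hb]
    ring
  have KC : ∀ c ∈ C, K (s c) (s c) = (starRingEnd ℂ) (f (r c) c) := by
    intro c hc
    rw [hK, hs', hs]
    simp only [map_sub, ρC c hc, LinearMap.sub_apply, qC _ c hc, aux_lag f hC hc hc]
    ring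
  have KBC : ∀ b ∈ B, ∀ c ∈ C, K (s b) (s c) = 0 := by
    intro b hb c hc
    rw [hK, hs', hs']
    simp only [map_sub, ρB b hb, sub_zero, qC _ c hc]
    ring
  let T0 := ((A ⊓ B) ⊔ (A ⊓ C)).prod ((B ⊓ D) ⊔ (C ⊓ D))
  let dg : X →ₗ[ℂ] X × X := LinearMap.prod LinearMap.id LinearMap.id
  have hdg : ∀ x, dg x = (x, x) := fun x => rfl
  let T1 := (A ⊓ D).map dg
  have hT0V : T0 ≤ V := by
    rintro x ⟨h1, h2⟩
    exact ⟨(sup_le inf_le_left inf_le_left : (A ⊓ B) ⊔ (A ⊓ C) ≤ A) h1,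
      (sup_le inf_le_right inf_le_right : (B ⊓ D) ⊔ (C ⊓ D) ≤ D) h2⟩
  have hT1V : T1 ≤ V := by
    rintro _ ⟨x, hx, rfl⟩
    exact ⟨hx.1, hx.2⟩
  have hTV : T0 ⊔ T1 ≤ V := sup_le hT0V hT1V
  have K0 : ∀ x ∈ T0, ∀ y ∈ V, K x y = 0 := by
    rintro x ⟨h1, h2⟩ y ⟨hy1, hy2⟩
    rw [hK]
    have e1 : f (ρ x.1) y.1 = 0 := by
      obtain ⟨u, hu, v, hv, e⟩ := Submodule.mem_sup.mp h1
      rw [← e, map_add, ρB u hu.2, ρC v hv.2, zero_add]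
      exact aux_lag f hA hv.1 hy1
    have e2 : f (ρ x.2) y.2 = 0 := by
      obtain ⟨u, hu, v, hv, e⟩ := Submodule.mem_sup.mp h2
      rw [← e, map_add, ρB u hu.1, ρC v hv.1, zero_add]
      exact aux_lag f hD hv.2 hy2
    rw [e1, e2]; simp
  have K1 : ∀ x y, K (dg x) y = f (ρ x) (y.2 - y.1) := by
    intro x y
    rw [hK, hdg, map_sub]; ring
  have KsB : ∀ x ∈ T0 ⊔ T1, ∀ b ∈ B ⊓ (A ⊔ D), K x (s b) = 0 := by
    intro x hx b hb
    obtain ⟨u, hu, v, hv, rfl⟩ := Submodule.mem_sup.mp hx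
    obtain ⟨w, hw, rfl⟩ := hv
    rw [map_add, LinearMap.add_apply, K0 u hu _ (hsV b hb.2), K1, hs']
    have e : r b - b - r b = - b := by abel
    have hrb := hr b hb.2
    have e2 : f w b = 0 := by
      have : b = r b + (b - r b) := by abel
      rw [this, map_add, aux_lag f hA hw.1 hrb.1, aux_lag f hD hw.2 hrb.2, add_zero]
    simp only [e, map_neg, qB w b hb.1, e2]
    simp
  have KsC : ∀ x ∈ T0 ⊔ T1, ∀ b ∈ C ⊓ (A ⊔ D), K x (s b) = 0 := by
    intro x hx b hb
    obtain ⟨u, hu, v, hv, rfl⟩ := Submodule.mem_sup.mp hx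
    obtain ⟨w, hw, rfl⟩ := hv
    rw [map_add, LinearMap.add_apply, K0 u hu _ (hsV b hb.2), K1, hs']
    have e : r b - b - r b = - b := by abel
    simp only [e, map_neg, qC w b hb.1]
    simp
  have KT : ∀ x ∈ T0 ⊔ T1, ∀ y ∈ T0 ⊔ T1, K x y = 0 := by
    intro x hx y hy
    obtain ⟨u, hu, v, hv, rfl⟩ := Submodule.mem_sup.mp hx
    rw [map_add, LinearMap.add_apply, K0 u hu _ (hTV hy)]
    obtain ⟨u', hu', v', hv', rfl⟩ := Submodule.mem_sup.mp hy
    rw [map_add, ← hherm _ (hT0V hu') _ (hT1V hv), K0 u' hu' _ (hT1V hv)]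
    obtain ⟨w, hw, rfl⟩ := hv
    obtain ⟨w', hw', rfl⟩ := hv'
    rw [K1, hdg]
    simp
  have dT1 : finrank ℂ T1 = finrank ℂ ↥(A ⊓ D) :=
    aux_fmap dg _ (fun x y h => congrArg Prod.fst h)
  have bot_of : ∀ L M : Submodule ℂ X, L ≤ B → M ≤ C → finrank ℂ ↥(L ⊔ M) = finrank ℂ L + finrank ℂ M := by
    intro L M hL hM
    have h := Submodule.finrank_sup_add_finrank_inf_eq L M
    have : L ⊓ M = ⊥ := by
      rw [eq_bot_iff, ← hBC]; exact inf_le_inf hL hM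
    rw [this] at h
    simpa using h
  have dT0 : finrank ℂ T0 = finrank ℂ ↥(A ⊓ B) + finrank ℂ ↥(A ⊓ C) +
      (finrank ℂ ↥(B ⊓ D) + finrank ℂ ↥(C ⊓ D)) := by
    rw [aux_finrank_prod, bot_of _ _ inf_le_right inf_le_right, bot_of _ _ inf_le_left inf_le_left]
  have dT01 : finrank ℂ ↥(T0 ⊓ T1) ≤ finrank ℂ ↥(A ⊓ B ⊓ D) + finrank ℂ ↥(A ⊓ C ⊓ D) := by
    have hle : T0 ⊓ T1 ≤ ((A ⊓ B ⊓ D) ⊔ (A ⊓ C ⊓ D)).map dg := by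
      rintro _ ⟨⟨h1, h2⟩, ⟨x, hx, rfl⟩⟩
      refine ⟨x, ?_, rfl⟩
      rw [hdg] at h1 h2
      obtain ⟨u, hu, v, hv, e⟩ := Submodule.mem_sup.mp h1
      obtain ⟨u', hu', v', hv', e'⟩ := Submodule.mem_sup.mp h2
      simp only at e e'
      have ev : v = v' := by
        have h3 : ρ x = v := by rw [← e, map_add, ρB u hu.2, ρC v hv.2, zero_add]
        have h4 : ρ x = v' := by rw [← e', map_add, ρB u' hu'.1, ρC v' hv'.1, zero_add]
        rw [← h3, h4]
      subst ev
      have eu : u = u' := by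
        rw [← e'] at e
        exact add_right_cancel e
      subst eu
      exact Submodule.mem_sup.mpr ⟨u, ⟨hu, hu'.2⟩, v, ⟨hv, hv'.2⟩, e⟩
    refine (Submodule.finrank_mono hle).trans ?_
    rw [aux_fmap dg _ (fun x y h => congrArg Prod.fst h)]
    rw [bot_of _ _ (inf_le_left.trans inf_le_right) (inf_le_left.trans inf_le_right)]
  have dT := Submodule.finrank_sup_add_finrank_inf_eq T0 T1
  -- the two inequalities
  have ineq1 := aux_key K V (T0 ⊔ T1) hTV (s ∘ₗ PB.subtype) (s ∘ₗ NC.subtype)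
    (NA.subtype.prodMap PD.subtype)
    (fun x => hsV _ (hPB x.2).2) (fun x => hsV _ (hNC x.2).2)
    (fun x => ⟨hNA x.1.2, hPD x.2.2⟩)
    (by
      intro x hx
      have := hPBp x x.2 (by simpa using hx)
      simp only [LinearMap.comp_apply, Submodule.subtype_apply]
      rw [KB _ (hPB x.2).1]
      simpa using this)
    (by
      intro x hx
      have := hNCn x x.2 (by simpa using hx)
      simp only [LinearMap.comp_apply, Submodule.subtype_apply]
      rw [KC _ (hNC x.2).1]
      simpa using this)
    (by
      rintro ⟨x, y⟩ hx
      rw [hK]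
      simp only [LinearMap.prodMap_apply, Submodule.subtype_apply, Complex.add_re, Complex.neg_re]
      by_cases h0 : x = 0
      · subst h0
        have := hPDp y y.2 (by rintro h; apply hx; simpa using h)
        simpa using this
      · have h1 := hNAn x x.2 (by simpa using h0)
        have h2 : 0 ≤ (f (ρ y) y).re := by
          by_cases hy : y = 0
          · simp [hy]
          · exact (hPDp y y.2 (by simpa using hy)).le
        linarith)
    KT hherm
    (fun x y => KBC _ (hPB x.2).1 _ (hNC y.2).1)
    (fun x hx y => KsB x hx _ (hPB y.2))
    (fun x hx y => KsC x hx _ (hNC y.2))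
  have ineq2 := aux_key (-K) V (T0 ⊔ T1) hTV (s ∘ₗ NB.subtype) (s ∘ₗ PC.subtype)
    (PA.subtype.prodMap ND.subtype)
    (fun x => hsV _ (hNB x.2).2) (fun x => hsV _ (hPC x.2).2)
    (fun x => ⟨hPA x.1.2, hND x.2.2⟩)
    (by
      intro x hx
      have := hNBn x x.2 (by simpa using hx)
      simp only [LinearMap.comp_apply, Submodule.subtype_apply, LinearMap.neg_apply]
      rw [KB _ (hNB x.2).1]
      simpa using this)
    (by
      intro x hx
      have := hPCp x x.2 (by simpa using hx)
      simp only [LinearMap.comp_apply, Submodule.subtype_apply, LinearMap.neg_apply]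
      rw [KC _ (hPC x.2).1]
      simpa using this)
    (by
      rintro ⟨x, y⟩ hx
      simp only [LinearMap.neg_apply]
      rw [hK]
      simp only [LinearMap.prodMap_apply, Submodule.subtype_apply, Complex.add_re, Complex.neg_re]
      by_cases h0 : x = 0
      · subst h0
        have := hNDn y y.2 (by rintro h; apply hx; simpa using h)
        simpa using this
      · have h1 := hPAp x x.2 (by simpa using h0)
        have h2 : (f (ρ y) y).re ≤ 0 := by
          by_cases hy : y = 0
          · simp [hy]
          · exact (hNDn y y.2 (by simpa using hy)).le
        linarith)
    (fun x hx y hy => by simp [KT x hx y hy])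
    (fun x hx y hy => by simp [hherm x hx y hy])
    (fun x y => by
      have := KBC _ (hNB x.2).1 _ (hPC y.2).1
      simpa using this)
    (fun x hx y => by
      have := KsB x hx _ (hNB y.2)
      simpa using this)
    (fun x hx y => by
      have := KsC x hx _ (hPC y.2)
      simpa using this)
  rw [Module.finrank_prod, hV] at ineq1 ineq2
  have c1 : C ⊓ A ⊓ B = ⊥ := by
    rw [eq_bot_iff, ← hCB]
    exact le_inf (inf_le_left.trans inf_le_left) inf_le_right
  have c2 : C ⊓ D ⊓ B = ⊥ := by
    rw [eq_bot_iff, ← hCB]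
    exact le_inf (inf_le_left.trans inf_le_left) inf_le_right
  rw [hCB, c1, inf_comm C A] at eA
  rw [hCB, c2, inf_comm D B] at eD
  simp only [finrank_bot] at eA eD
  rw [← mB, ← mC, ← mD]
  omega

end aux

section conc
open Module

theorem aux_sig (n : ℕ) (x y : CV n) : sigmaC n x y =
    (∑ i : Fin n, (starRingEnd ℂ) (x (Sum.inl i)) * y (Sum.inr i)) -
      ∑ i : Fin n, (starRingEnd ℂ) (x (Sum.inr i)) * y (Sum.inl i) := rfl

theorem aux_sig_skew (n : ℕ) (x y : CV n) :
    (starRingEnd ℂ) (sigmaC n x y) = - sigmaC n y x := by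
  simp [aux_sig, mul_comm]

theorem aux_sig_nondeg (n : ℕ) (x : CV n) (h : ∀ y, sigmaC n x y = 0) : x = 0 := by
  funext i
  rcases i with i | i
  · have := h (Pi.single (Sum.inr i) 1)
    simpa [aux_sig, Pi.single_apply] using this
  · have := h (Pi.single (Sum.inl i) 1)
    simpa [aux_sig, Pi.single_apply] using this

theorem aux_sig_mat (n : ℕ) (x y : CV n) : sigmaC n x y =
    - (star x ⬝ᵥ (((symplJ n).map Complex.ofReal).mulVec y)) := by
  have h : (symplJ n).map Complex.ofReal = Matrix.fromBlocks 0 (-1) 1 0 := by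
    ext i j
    rcases i with i | i <;> rcases j with j | j <;>
      simp [symplJ, Matrix.one_apply, apply_ite Complex.ofReal]
  rw [h, aux_sig]
  simp [Matrix.fromBlocks_mulVec, dotProduct, Fintype.sum_sum_type, Matrix.neg_mulVec]
  ring

theorem aux_sig_pres (n : ℕ) (Θ : Matrix (Fin n ⊕ Fin n) (Fin n ⊕ Fin n) ℝ)
    (hΘ : Θ.transpose * symplJ n * Θ = symplJ n) (x y : CV n) :
    sigmaC n (cAction Θ x) (cAction Θ y) = sigmaC n x y := by
  rw [aux_sig_mat, aux_sig_mat]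
  congr 1
  have h1 : (Θ.map Complex.ofReal).conjTranspose * (symplJ n).map Complex.ofReal
      * Θ.map Complex.ofReal = (symplJ n).map Complex.ofReal := by
    have h2 : (Θ.map Complex.ofReal).conjTranspose = Θ.transpose.map Complex.ofReal := by
      ext i j
      simp
    rw [h2]
    have h3 := congrArg (fun M => M.map Complex.ofRealHom) hΘ
    simp only [Matrix.map_mul] at h3
    exact h3
  conv_rhs => rw [← h1]
  simp only [cAction, Matrix.mulVecLin_apply]
  rw [Matrix.star_mulVec, ← Matrix.mulVec_mulVec, ← Matrix.mulVec_mulVec,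
    ← Matrix.dotProduct_mulVec]

theorem aux_s2 (n : ℕ) (x y : CV n × CV n) : sigma2C n x y =
    - sigmaC n x.1 y.1 + sigmaC n x.2 y.2 := rfl

theorem aux_graph_lag (n : ℕ) (M : CV n →ₗ[ℂ] CV n)
    (hM : ∀ x y, sigmaC n (M x) (M y) = sigmaC n x y) (hsurj : Function.Surjective M) :
    IsLagrangianC (sigma2C n) (LinearMap.graph M) := by
  ext ⟨u, v⟩
  rw [LinearMap.mem_graph_iff]
  constructor
  · intro h w hw
    rw [LinearMap.mem_graph_iff] at hw
    simp only at h
    rw [aux_s2, hw, h, hM]; simp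
  · intro h
    have h1 : v - M u = 0 := by
      apply aux_sig_nondeg
      intro y
      obtain ⟨z, rfl⟩ := hsurj y
      have := h (z, M z) (by rw [LinearMap.mem_graph_iff])
      rw [aux_s2] at this
      simp only at this
      rw [map_sub, LinearMap.sub_apply, hM]
      linear_combination this
    exact sub_eq_zero.mp h1

theorem aux_pi_iso (n : ℕ) (x y : CV n) (hx : x ∈ PiV n) (hy : y ∈ PiV n) :
    sigmaC n x y = 0 := by
  have h1 : ∀ i, x (Sum.inr i) = 0 := hx
  have h2 : ∀ i, y (Sum.inr i) = 0 := hy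
  simp [aux_sig, h1, h2]

theorem aux_pi_orth (n : ℕ) (x : CV n) (h : ∀ y ∈ PiV n, sigmaC n x y = 0) : x ∈ PiV n := by
  intro i
  have := h (Pi.single (Sum.inl i) 1) (by intro j; simp)
  simpa [aux_sig, Pi.single_apply] using this

theorem aux_pi_lag (n : ℕ) : IsLagrangianC (sigma2C n) (Pi2Sub n) := by
  ext ⟨u, v⟩
  constructor
  · rintro ⟨h1, h2⟩ w ⟨hw1, hw2⟩
    rw [aux_s2, aux_pi_iso n _ _ h1 hw1, aux_pi_iso n _ _ h2 hw2]; simp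
  · intro h
    refine ⟨aux_pi_orth n _ fun y hy => ?_, aux_pi_orth n _ fun y hy => ?_⟩
    · have := h (y, 0) ⟨hy, Submodule.zero_mem _⟩
      rw [aux_s2] at this
      simpa using this
    · have := h (0, y) ⟨Submodule.zero_mem _, hy⟩
      rw [aux_s2] at this
      simpa using this

theorem aux_conc (n : ℕ) (Θ : Matrix (Fin n ⊕ Fin n) (Fin n ⊕ Fin n) ℝ)
    (hΘ : Θ.transpose * symplJ n * Θ = symplJ n) (α : ℂ)
    (hα : (starRingEnd ℂ) α * α = 1) (hα1 : α ≠ 1) :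
    (maslovIndexC (sigma2C n) (Pi2Sub n)
        (LinearMap.graph (α • cAction Θ)) (DiaSub n) : ℤ)
      - (maslovIndexC (sigma2C n) (Pi2Sub n)
          (LinearMap.graph (cAction Θ)) (DiaSub n) : ℤ)
    = -(maslovIndexC (sigma2C n) (LinearMap.graph (cAction Θ)) (DiaSub n)
          (LinearMap.graph (α • cAction Θ)) : ℤ)
      + (n : ℤ)
      + (-(Module.finrank ℂ
            ↥(LinearMap.ker (cAction Θ - LinearMap.id) ⊓ PiV n) : ℤ)
        + (Module.finrank ℂ
            ↥(LinearMap.ker (cAction Θ - (α⁻¹ : ℂ) • LinearMap.id) ⊓ PiV n) : ℤ)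
        - (Module.finrank ℂ
            ↥(LinearMap.ker (cAction Θ - (α⁻¹ : ℂ) • LinearMap.id)) : ℤ)) := by
  have hα0 : α ≠ 0 := by rintro rfl; simp at hα
  have hα' : α - 1 ≠ 0 := sub_ne_zero.mpr hα1
  have hpres := aux_sig_pres n Θ hΘ
  set θ := cAction Θ with hθ
  have hinj : Function.Injective θ := by
    rw [← LinearMap.ker_eq_bot, LinearMap.ker_eq_bot']
    intro x hx
    apply aux_sig_nondeg
    intro y
    rw [← hpres, hx]; simp
  have hsurj : Function.Surjective θ := LinearMap.surjective_of_injective hinj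
  let e := LinearEquiv.ofBijective θ ⟨hinj, hsurj⟩
  have he : ∀ x, θ (e.symm x) = x := fun x => e.apply_symm_apply x
  have hs : ∀ x y, (starRingEnd ℂ) (sigma2C n x y) = - sigma2C n y x := by
    intro x y
    simp only [aux_s2, map_add, map_neg, aux_sig_skew]; ring
  have hn : ∀ x, (∀ y, sigma2C n x y = 0) → x = 0 := by
    rintro ⟨u, v⟩ h
    have h1 : u = 0 := aux_sig_nondeg n u fun y => by
      have := h (y, 0)
      rw [aux_s2] at this
      simpa using this
    have h2 : v = 0 := aux_sig_nondeg n v fun y => by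
      have := h (0, y)
      rw [aux_s2] at this
      simpa using this
    rw [h1, h2]; rfl
  have hC := aux_graph_lag n θ hpres hsurj
  have hB := aux_graph_lag n (α • θ)
    (by
      intro x y
      simp only [LinearMap.smul_apply, LinearMap.map_smulₛₗ, hpres, smul_eq_mul, RingHom.id_apply,
        map_smul]
      linear_combination (sigmaC n x y) * hα)
    (by
      intro y
      obtain ⟨x, hx⟩ := hsurj (α⁻¹ • y)
      exact ⟨x, by simp [hx, hα0]⟩)
  have hD : IsLagrangianC (sigma2C n) (DiaSub n) :=
    aux_graph_lag n LinearMap.id (by simp) Function.surjective_id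
  have hBC : LinearMap.graph (α • θ) ⊓ LinearMap.graph θ = ⊥ := by
    rw [eq_bot_iff]
    rintro ⟨u, v⟩ ⟨h1, h2⟩
    have h1 : v = α • θ u := h1
    have h2 : v = θ u := h2
    have h3 : (α - 1) • θ u = 0 := by rw [sub_smul, one_smul, ← h1, h2, sub_self]
    have h4 : θ u = 0 := (smul_eq_zero.mp h3).resolve_left hα'
    have h5 : u = 0 := hinj (by simpa using h4)
    rw [h4] at h2
    simp [h2, h5]
  let y : CV n × CV n →ₗ[ℂ] CV n :=
    (α - 1)⁻¹ • (α • LinearMap.fst ℂ (CV n) (CV n) -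
      (e.symm : CV n →ₗ[ℂ] CV n) ∘ₗ LinearMap.snd ℂ (CV n) (CV n))
  have hy : ∀ w, y w = (α - 1)⁻¹ • (α • w.1 - e.symm w.2) := fun w => rfl
  let ρ : CV n × CV n →ₗ[ℂ] CV n × CV n := LinearMap.prod y (θ ∘ₗ y)
  have hρd : ∀ w, ρ w = (y w, θ (y w)) := fun w => rfl
  let R : CV n × CV n →ₗ[ℂ] CV n × CV n := LinearMap.prodMap (-LinearMap.id) LinearMap.id
  have hRd : ∀ w, R w = (- w.1, w.2) := fun w => rfl
  have hρ : ∀ w, ρ w ∈ LinearMap.graph θ ∧ w - ρ w ∈ LinearMap.graph (α • θ) := by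
    rintro ⟨u, v⟩
    obtain ⟨t, rfl⟩ := hsurj v
    have ht : e.symm (θ t) = t := e.symm_apply_apply t
    refine ⟨by rw [LinearMap.mem_graph_iff, hρd], ?_⟩
    rw [LinearMap.mem_graph_iff, hρd, hy]
    simp only [ht, Prod.mk_sub_mk, LinearMap.smul_apply]
    rw [← map_sub, ← map_smul]
    congr 1
    ext i
    simp
    field_simp
    ring
  have hmain := aux_main (sigma2C n) hs hn (Pi2Sub n) (LinearMap.graph (α • θ))
    (LinearMap.graph θ) (DiaSub n) (aux_pi_lag n) hB hC hD hBC ρ hρ R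
    (by
      rintro ⟨a, b⟩ ⟨c, d⟩ h
      rw [hRd, hRd] at h
      simpa using h)
    (by
      rintro ⟨a, b⟩ ⟨h1, h2⟩
      exact ⟨Submodule.neg_mem _ h1, h2⟩)
    (by
      rintro ⟨a, b⟩ ⟨h1, h2⟩
      have ea := aux_pi_iso n a a h1 h1
      have eb := aux_pi_iso n b b h2 h2
      rw [hRd, hρd, hρd, hy, hy, aux_s2, aux_s2]
      simp only [map_smul, map_sub, map_neg, he, LinearMap.map_smulₛₗ, LinearMap.smul_apply,
        LinearMap.sub_apply, LinearMap.neg_apply, ea, eb, smul_eq_mul, smul_neg, RingHom.id_apply]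
      ring)
    (2 * n) (by simp; ring)
  let dg : CV n →ₗ[ℂ] CV n × CV n := LinearMap.prod LinearMap.id LinearMap.id
  have hdg : Function.Injective dg := fun x y h => congrArg Prod.fst h
  have d1 : finrank ℂ ↥(Pi2Sub n ⊓ LinearMap.graph θ) =
      finrank ℂ ↥(Pi2Sub n ⊓ LinearMap.graph (α • θ)) := by
    let g : CV n × CV n →ₗ[ℂ] CV n × CV n := LinearMap.prodMap LinearMap.id (α • LinearMap.id)
    have hh : (Pi2Sub n ⊓ LinearMap.graph θ).map g = Pi2Sub n ⊓ LinearMap.graph (α • θ) := by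
      ext ⟨u, v⟩
      constructor
      · rintro ⟨⟨a, b⟩, ⟨⟨h1, h2⟩, h3⟩, h4⟩
        have h3 : b = θ a := h3
        have h4 : (a, α • b) = (u, v) := h4
        obtain ⟨rfl, rfl⟩ := Prod.mk.inj h4
        exact ⟨⟨h1, Submodule.smul_mem _ _ h2⟩, by rw [h3]; rfl⟩
      · rintro ⟨⟨h1, h2⟩, h3⟩
        have h3 : v = α • θ u := h3
        refine ⟨(u, α⁻¹ • v), ⟨⟨h1, Submodule.smul_mem _ _ h2⟩, ?_⟩, ?_⟩
        · change α⁻¹ • v = θ u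
          rw [h3, smul_smul, inv_mul_cancel₀ hα0, one_smul]
        · change (u, α • α⁻¹ • v) = (u, v)
          rw [smul_smul, mul_inv_cancel₀ hα0, one_smul]
    rw [← hh, aux_fmap]
    rintro ⟨a, b⟩ ⟨c, d⟩ h
    have h' : (a, α • b) = (c, α • d) := h
    obtain ⟨h1, h2⟩ := Prod.mk.inj h'
    have h3 : b = d := smul_right_injective (CV n) hα0 h2
    rw [h1, h3]
  have k1 : ∀ x, x ∈ LinearMap.ker (θ - (α⁻¹ : ℂ) • LinearMap.id) ↔ x = α • θ x := by
    intro x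
    rw [LinearMap.mem_ker, LinearMap.sub_apply, sub_eq_zero, LinearMap.smul_apply,
      LinearMap.id_apply]
    constructor
    · intro h
      rw [h, smul_smul, mul_inv_cancel₀ hα0, one_smul]
    · intro h
      nth_rewrite 2 [h]
      rw [smul_smul, inv_mul_cancel₀ hα0, one_smul]
  have d2 : finrank ℂ ↥(LinearMap.graph (α • θ) ⊓ DiaSub n) =
      finrank ℂ ↥(LinearMap.ker (θ - (α⁻¹ : ℂ) • LinearMap.id)) := by
    rw [← aux_fmap dg _ hdg]
    refine congrArg (fun L : Submodule ℂ (CV n × CV n) => finrank ℂ L) ?_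
    ext ⟨u, v⟩
    constructor
    · rintro ⟨h1, h2⟩
      have h1 : v = α • θ u := h1
      have h2 : v = u := h2
      subst h2
      exact ⟨v, (k1 v).mpr h1, rfl⟩
    · rintro ⟨x, hx, h⟩
      have h : (x, x) = (u, v) := h
      obtain ⟨rfl, rfl⟩ := Prod.mk.inj h
      exact ⟨(k1 x).mp hx, rfl⟩
  have d3 : finrank ℂ ↥(Pi2Sub n ⊓ LinearMap.graph (α • θ) ⊓ DiaSub n) =
      finrank ℂ ↥(LinearMap.ker (θ - (α⁻¹ : ℂ) • LinearMap.id) ⊓ PiV n) := by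
    rw [← aux_fmap dg _ hdg]
    refine congrArg (fun L : Submodule ℂ (CV n × CV n) => finrank ℂ L) ?_
    ext ⟨u, v⟩
    constructor
    · rintro ⟨⟨h0, h1⟩, h2⟩
      have h1 : v = α • θ u := h1
      have h2 : v = u := h2
      subst h2
      exact ⟨v, ⟨(k1 v).mpr h1, h0.1⟩, rfl⟩
    · rintro ⟨x, hx, h⟩
      have h : (x, x) = (u, v) := h
      obtain ⟨rfl, rfl⟩ := Prod.mk.inj h
      exact ⟨⟨⟨hx.2, hx.2⟩, (k1 x).mp hx.1⟩, rfl⟩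
  have d4 : finrank ℂ ↥(Pi2Sub n ⊓ LinearMap.graph θ ⊓ DiaSub n) =
      finrank ℂ ↥(LinearMap.ker (θ - LinearMap.id) ⊓ PiV n) := by
    have k2 : ∀ x, x ∈ LinearMap.ker (θ - LinearMap.id) ↔ x = θ x := by
      intro x
      rw [LinearMap.mem_ker, LinearMap.sub_apply, sub_eq_zero, LinearMap.id_apply, eq_comm]
    rw [← aux_fmap dg _ hdg]
    refine congrArg (fun L : Submodule ℂ (CV n × CV n) => finrank ℂ L) ?_
    ext ⟨u, v⟩
    constructor
    · rintro ⟨⟨h0, h1⟩, h2⟩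
      have h1 : v = θ u := h1
      have h2 : v = u := h2
      subst h2
      exact ⟨v, ⟨(k2 v).mpr h1, h0.1⟩, rfl⟩
    · rintro ⟨x, hx, h⟩
      have h : (x, x) = (u, v) := h
      obtain ⟨rfl, rfl⟩ := Prod.mk.inj h
      exact ⟨⟨⟨hx.2, hx.2⟩, (k2 x).mp hx.1⟩, rfl⟩
  rw [d1, d2, d3, d4] at hmain
  push_cast at hmain
  linarith

end conc

/-- comparison of the Maslov indices `i(Π², Γ(ωʲΘ), Δ)` and
`i(Π², Γ(Θ), Δ)` in terms of `i(Γ(Θ), Δ, Γ(ωʲΘ))` and dimensions of eigenspaces. -/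
theorem maslov_index_comparison_root_of_unity
    (n k : ℕ) (Θ : Matrix (Fin n ⊕ Fin n) (Fin n ⊕ Fin n) ℝ)
    (hΘ : Θ.transpose * symplJ n * Θ = symplJ n)
    (ω : ℂ) (hω : IsPrimitiveRoot ω k) (j : ℕ) (hj1 : 1 ≤ j) (hj2 : j ≤ k - 1) :
    (maslovIndexC (sigma2C n) (Pi2Sub n)
        (LinearMap.graph ((ω ^ j) • cAction Θ)) (DiaSub n) : ℤ)
      - (maslovIndexC (sigma2C n) (Pi2Sub n)
          (LinearMap.graph (cAction Θ)) (DiaSub n) : ℤ)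
    = -(maslovIndexC (sigma2C n) (LinearMap.graph (cAction Θ)) (DiaSub n)
          (LinearMap.graph ((ω ^ j) • cAction Θ)) : ℤ)
      + (n : ℤ)
      + (-(Module.finrank ℂ
            ↥(LinearMap.ker (cAction Θ - LinearMap.id) ⊓ PiV n) : ℤ)
        + (Module.finrank ℂ
            ↥(LinearMap.ker (cAction Θ - ((ω ^ j)⁻¹ : ℂ) • LinearMap.id) ⊓ PiV n) : ℤ)
        - (Module.finrank ℂ
            ↥(LinearMap.ker (cAction Θ - ((ω ^ j)⁻¹ : ℂ) • LinearMap.id)) : ℤ)) := by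
  have hk : k ≠ 0 := by omega
  refine aux_conc n Θ hΘ (ω ^ j) ?_ ?_
  · have h1 : ‖ω ^ j‖ = 1 := by
      rw [norm_pow, hω.norm'_eq_one hk, one_pow]
    rw [mul_comm, Complex.mul_conj, Complex.normSq_eq_norm_sq, h1]
    simp
  · exact hω.pow_ne_one_of_pos_of_lt (by omega) (by omega)


end
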